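/- For all 1 ≤ l < k ≤ n and every point p = (x, x̂, A) ∈ Ω with x ∈ S^n (i.e. Σ_{r=0}^n x_r² = 1), the Lie bracket of the rolling vector fields satisfies [X_k, X_l](p) = (x_{l−1} / √(s_{l−1}(x) s_l(x))) · X_k(p) − (0, 0, A(E_{lk} − E_{kl})). -/

import Mathlib

open scoped InnerProductSpace BigOperators

noncomputable section

/-- `s_j(x) = ∑_{r=j}^n x_r²`. -/
def sfun (n j : ℕ) (x : EuclideanSpace ℝ (Fin (n + 1))) : ℝ :=
  ∑ r : Fin (n + 1), if j ≤ (r : ℕ) then x r ^ 2 else 0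

/-- The `j`-th coordinate of `x` (read as a natural-number index, `0` out of range). -/
def coordfun (n : ℕ) (x : EuclideanSpace ℝ (Fin (n + 1))) (j : ℕ) : ℝ :=
  if h : j < n + 1 then x ⟨j, h⟩ else 0

/-- The vector field `e_j(x) = √(s_j/s_{j-1}) ( −∂_{j−1} + (x_{j−1}/s_j) Σ_{r=j}^n x_r ∂_r )`. -/
def efun (n j : ℕ) (x : EuclideanSpace ℝ (Fin (n + 1))) : EuclideanSpace ℝ (Fin (n + 1)) :=
  WithLp.toLp 2 fun r => Real.sqrt (sfun n j x / sfun n (j - 1) x) *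
    (-(if (r : ℕ) = j - 1 then 1 else 0)
      + coordfun n x (j - 1) / sfun n j x * (if j ≤ (r : ℕ) then x r else 0))

/-- `U = {x ∈ ℝ^{n+1} : x_n > 0}`. -/
def Usph (n : ℕ) : Set (EuclideanSpace ℝ (Fin (n + 1))) := {x | 0 < coordfun n x n}

/-- The unit sphere `S^n ⊂ ℝ^{n+1}`. -/
def sph (n : ℕ) : Set (EuclideanSpace ℝ (Fin (n + 1))) :=
  {x | ∑ r : Fin (n + 1), x r ^ 2 = 1}

attribute [local instance] Matrix.normedAddCommGroup Matrix.normedSpace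

/-- The ambient space of the trivialized configuration space
`Ω = U × ℝ^n × M_n(ℝ) ⊂ ℝ^{n+1} × ℝ^n × M_n(ℝ)`. -/
abbrev Conf (n : ℕ) :=
  EuclideanSpace ℝ (Fin (n + 1)) × EuclideanSpace ℝ (Fin n) × Matrix (Fin n) (Fin n) ℝ

/-- The elementary matrix `E_{ik}` with `1`-based indices `i, k`. -/
def Emat (n i k : ℕ) : Matrix (Fin n) (Fin n) ℝ :=
  Matrix.of fun a b => if (a : ℕ) + 1 = i ∧ (b : ℕ) + 1 = k then 1 else 0

/-- The standard basis vector `ε_k` of `ℝ^n`, with a `1`-based index `k`. -/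
def eps (n k : ℕ) : EuclideanSpace ℝ (Fin n) :=
  WithLp.toLp 2 fun i => if (i : ℕ) + 1 = k then 1 else 0

/-- The rolling vector field
`X_k(x, x̂, A) = (e_k(x), A ε_k, −Σ_{i=1}^{k−1} (x_{i−1}/√(s_{i−1} s_i)) A (E_{ik} − E_{ki}))`. -/
def Xfield (n k : ℕ) : Conf n → Conf n := fun p =>
  (efun n k p.1, WithLp.toLp 2 (p.2.2.mulVec (eps n k).ofLp),
    -∑ i ∈ Finset.Icc 1 (k - 1),
      (coordfun n p.1 (i - 1) / Real.sqrt (sfun n (i - 1) p.1 * sfun n i p.1)) •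
        (p.2.2 * (Emat n i k - Emat n k i)))

/-- `Y_{lk}(x, x̂, A) = (0, 0, A(E_{lk} − E_{kl}))`. -/
def Yfield (n l k : ℕ) : Conf n → Conf n := fun p =>
  (0, 0, p.2.2 * (Emat n l k - Emat n k l))

/-- `Z_k(x, x̂, A) = (0, A ε_k, 0)`. -/
def Zfield (n k : ℕ) : Conf n → Conf n := fun p =>
  (0, WithLp.toLp 2 (p.2.2.mulVec (eps n k).ofLp), 0)

/-!
Since `e_{l+1}` is tangent to the spheres `s_0 = const, …, s_l = const` and scales the coordinates
of index `> l` at the rate `c_l = x_l / √(s_l s_{l+1})`, it acts on functions of those coordinates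
as `c_l` times the Euler field. For `l < k` the functions `s_m` (`m > l`), `c_k` and
`√(s_{k+1} / s_k)` are homogeneous of degrees `2`, `-1` and `0`, so `e_{k+1}` is constant along
`e_{l+1}`, while the derivative of `e_{l+1}` along `e_{k+1}` is `c_l e_{k+1}`. Hence
`[e_{k+1}, e_{l+1}] = c_l e_{k+1}`.

The field `X_{k+1}` lifts `e_{k+1}` with infinitesimal rotation `ε_{k+1} ∧ w_k`, where
`w_k = c_0 ε_1 + ⋯ + c_{k-1} ε_k`. Because `c_i² = 1 / s_{i+1} - 1 / s_i`, the inner product of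
`w_k` and `w_l` telescopes to `1 / s_l - 1 / s_0`. The derivative of `w_k` along `e_{l+1}` contains
`-(1 / s_l) ε_{l+1}`, which cancels the `1 / s_l` and leaves the curvature term
`-(1 / s_0) ε_{l+1} ∧ ε_{k+1}`.
-/

open scoped Matrix

section Wedge

variable {ι R : Type*} [CommRing R]

/-- The bivector `u ∧ v`, encoded as the skew-symmetric matrix `u vᵀ - v uᵀ`; thus
`E_{lk} - E_{kl}` is `ε_l ∧ ε_k`. -/
def wedge : (ι → R) →ₗ[R] (ι → R) →ₗ[R] Matrix ι ι R :=
  vecMulVecBilin R R - (vecMulVecBilin R R).flip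

theorem wedge_apply (u v : ι → R) :
    wedge u v = Matrix.vecMulVec u v - Matrix.vecMulVec v u := rfl

theorem wedge_swap (u v : ι → R) : wedge v u = -wedge u v := by
  rw [wedge_apply, wedge_apply, neg_sub]

theorem transpose_wedge (u v : ι → R) : (wedge u v)ᵀ = -wedge u v := by
  simp only [wedge_apply, Matrix.transpose_sub, Matrix.transpose_vecMulVec, neg_sub]

variable [Fintype ι]

theorem wedge_mulVec (u v w : ι → R) :
    wedge u v *ᵥ w = (v ⬝ᵥ w) • u - (u ⬝ᵥ w) • v := by
  simp only [wedge_apply, Matrix.sub_mulVec, Matrix.vecMulVec_mulVec, op_smul_eq_smul]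

theorem lie_wedge {S : Matrix ι ι R} (hS : Sᵀ = -S) (u v : ι → R) :
    ⁅S, wedge u v⁆ = wedge (S *ᵥ u) v + wedge u (S *ᵥ v) := by
  have vecMul_eq (w : ι → R) : w ᵥ* S = -(S *ᵥ w) := by
    rw [← Matrix.mulVec_transpose, hS, Matrix.neg_mulVec]
  simp only [Ring.lie_def, wedge_apply, mul_sub, sub_mul, Matrix.mul_vecMulVec,
    Matrix.vecMulVec_mul, vecMul_eq, Matrix.vecMulVec_neg]
  abel

end Wedge

section InvariantField

variable {E ι : Type*} [Fintype ι]

/-- The vector field `(x, x̂, A) ↦ (e(x), A v, A W(x))` on `E × ℝ^ι × M_ι(ℝ)`. These are the lifts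
of vector fields `e` on `E` that are invariant under the affine group acting on `(x̂, A)` by
`x̂ ↦ B x̂ + b` and `A ↦ B A`. -/
def invariantField (e : E → E) (v : ι → ℝ) (W : E → Matrix ι ι ℝ)
    (p : E × EuclideanSpace ℝ ι × Matrix ι ι ℝ) : E × EuclideanSpace ℝ ι × Matrix ι ι ℝ :=
  (e p.1, WithLp.toLp 2 (p.2.2 *ᵥ v), p.2.2 * W p.1)

variable [NormedAddCommGroup E] [NormedSpace ℝ E]

theorem fderiv_invariantField {e : E → E} (v : ι → ℝ) {W : E → Matrix ι ι ℝ}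
    {p : E × EuclideanSpace ℝ ι × Matrix ι ι ℝ} (he : DifferentiableAt ℝ e p.1)
    (hW : DifferentiableAt ℝ W p.1) (q : E × EuclideanSpace ℝ ι × Matrix ι ι ℝ) :
    fderiv ℝ (invariantField e v W) p q =
      (fderiv ℝ e p.1 q.1, WithLp.toLp 2 (q.2.2 *ᵥ v),
        p.2.2 * fderiv ℝ W p.1 q.1 + q.2.2 * W p.1) := by
  have he' : HasFDerivAt (fun q : E × EuclideanSpace ℝ ι × Matrix ι ι ℝ => e q.1) _ p :=
    he.hasFDerivAt.comp p hasFDerivAt_fst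
  have hW' : HasFDerivAt (fun q : E × EuclideanSpace ℝ ι × Matrix ι ι ℝ => W q.1) _ p :=
    hW.hasFDerivAt.comp p hasFDerivAt_fst
  have hA := ((ContinuousLinearMap.snd ℝ (EuclideanSpace ℝ ι) (Matrix ι ι ℝ)).comp
    (ContinuousLinearMap.snd ℝ E _)).hasFDerivAt (x := p)
  have hv := ((WithLp.linearEquiv 2 ℝ (ι → ℝ)).symm.toLinearMap ∘ₗ
    (Matrix.mulVecBilin ℝ ℝ).flip v).toContinuousLinearMap.hasFDerivAt.comp p hA
  have hAW := (LinearMap.mul ℝ (Matrix ι ι ℝ)).toContinuousBilinearMap.hasFDerivAt_of_bilinear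
    hA hW'
  exact congrArg (· q) (he'.prodMk (hv.prodMk hAW)).fderiv

theorem lieBracket_invariantField {e e' : E → E} (v v' : ι → ℝ) {W W' : E → Matrix ι ι ℝ}
    {p : E × EuclideanSpace ℝ ι × Matrix ι ι ℝ}
    (he : DifferentiableAt ℝ e p.1) (he' : DifferentiableAt ℝ e' p.1)
    (hW : DifferentiableAt ℝ W p.1) (hW' : DifferentiableAt ℝ W' p.1) :
    VectorField.lieBracket ℝ (invariantField e v W) (invariantField e' v' W') p =
      (VectorField.lieBracket ℝ e e' p.1, WithLp.toLp 2 (p.2.2 *ᵥ (W p.1 *ᵥ v' - W' p.1 *ᵥ v)),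
        p.2.2 * (⁅W p.1, W' p.1⁆ + fderiv ℝ W' p.1 (e p.1) - fderiv ℝ W p.1 (e' p.1))) := by
  refine (congrArg₂ (· - ·) (fderiv_invariantField v' he' hW' (invariantField e v W p))
    (fderiv_invariantField v he hW (invariantField e' v' W' p))).trans ?_
  refine Prod.ext rfl (Prod.ext ?_ ?_)
  · simp only [invariantField, Prod.snd_sub, Prod.fst_sub, ← WithLp.toLp_sub, Matrix.mulVec_sub,
      Matrix.mulVec_mulVec]
  · simp only [invariantField, Prod.snd_sub, Ring.lie_def, mul_add, mul_sub, mul_assoc]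
    abel

end InvariantField

theorem fderiv_div_apply {𝕜 E : Type*} [NontriviallyNormedField 𝕜] [NormedAddCommGroup E]
    [NormedSpace 𝕜 E] {f g : E → 𝕜} {x : E} (hf : DifferentiableAt 𝕜 f x)
    (hg : DifferentiableAt 𝕜 g x) (hx : g x ≠ 0) (v : E) :
    fderiv 𝕜 (fun y => f y / g y) x v =
      (fderiv 𝕜 f x v * g x - f x * fderiv 𝕜 g x v) / g x ^ 2 := by
  have hdiv := hf.hasFDerivAt.fun_mul ((hasDerivAt_inv hx).comp_hasFDerivAt x hg.hasFDerivAt)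
  simp only [Function.comp_def, ← div_eq_mul_inv] at hdiv
  rw [hdiv.fderiv]
  simp only [add_apply, FunLike.coe_smul, Pi.smul_apply, smul_eq_mul]
  field_simp
  ring

section TailProj

variable {n : ℕ}

/-- The projection of `ℝ^n` that keeps the coordinates with (`0`-based) index at least `m`. -/
def tailProj (n m : ℕ) : EuclideanSpace ℝ (Fin n) →L[ℝ] EuclideanSpace ℝ (Fin n) :=
  LinearMap.toContinuousLinearMap
    { toFun := fun x => WithLp.toLp 2 fun r => if m ≤ (r : ℕ) then x r else 0
      map_add' := fun x y => by ext r; simp [ite_add_ite]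
      map_smul' := fun a x => by ext r; simp }

theorem tailProj_apply (m : ℕ) (x : EuclideanSpace ℝ (Fin n)) (r : Fin n) :
    tailProj n m x r = if m ≤ (r : ℕ) then x r else 0 := rfl

theorem tailProj_tailProj (m j : ℕ) (x : EuclideanSpace ℝ (Fin n)) :
    tailProj n m (tailProj n j x) = tailProj n (max m j) x := by
  ext r
  simp only [tailProj_apply, max_le_iff, ite_and]

theorem tailProj_eps_of_le {m j : ℕ} (h : m ≤ j) :
    tailProj n m (eps n (j + 1)) = eps n (j + 1) := by
  ext r
  simp only [tailProj_apply, eps]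
  grind

theorem tailProj_eps_of_lt {m j : ℕ} (h : j < m) : tailProj n m (eps n (j + 1)) = 0 := by
  ext r
  simp only [tailProj_apply, eps, PiLp.zero_apply]
  grind

end TailProj

section Frame

variable {n : ℕ} {x : EuclideanSpace ℝ (Fin (n + 1))}

theorem sfun_eq_norm_sq (m : ℕ) (x : EuclideanSpace ℝ (Fin (n + 1))) :
    sfun n m x = ‖tailProj (n + 1) m x‖ ^ 2 := by
  simp [sfun, EuclideanSpace.real_norm_sq_eq, tailProj_apply, ite_pow]

theorem sfun_nonneg (m : ℕ) (x : EuclideanSpace ℝ (Fin (n + 1))) : 0 ≤ sfun n m x :=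
  sfun_eq_norm_sq m x ▸ sq_nonneg _

theorem coordfun_coe (x : EuclideanSpace ℝ (Fin (n + 1))) (r : Fin (n + 1)) :
    coordfun n x r = x r :=
  dif_pos r.isLt

theorem sfun_eq_add (j : ℕ) (x : EuclideanSpace ℝ (Fin (n + 1))) :
    sfun n j x = coordfun n x j ^ 2 + sfun n (j + 1) x := by
  have hcoord : coordfun n x j ^ 2 = ∑ r : Fin (n + 1), if (r : ℕ) = j then x r ^ 2 else 0 := by
    by_cases hj : j < n + 1
    · lift j to Fin (n + 1) using hj
      simp [coordfun_coe, Fin.val_inj]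
    · rw [coordfun, dif_neg hj, Finset.sum_eq_zero fun r _ => if_neg (by omega)]
      simp
  rw [hcoord, sfun, sfun, ← Finset.sum_add_distrib]
  refine Finset.sum_congr rfl fun r _ => ?_
  split_ifs <;> first | omega | simp

theorem sfun_antitone (x : EuclideanSpace ℝ (Fin (n + 1))) : Antitone fun j => sfun n j x :=
  antitone_nat_of_succ_le fun j => by
    rw [sfun_eq_add j]
    exact le_add_of_nonneg_left (sq_nonneg _)

theorem le_of_sfun_pos {j : ℕ} (h : 0 < sfun n j x) : j ≤ n := by
  by_contra! hj
  exact h.ne' (Finset.sum_eq_zero fun r _ => if_neg (by omega))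

theorem sfun_pos_of_mem_Usph {j : ℕ} (hj : j ≤ n) (hx : x ∈ Usph n) : 0 < sfun n j x :=
  calc 0 < coordfun n x n ^ 2 := pow_pos hx 2
    _ ≤ sfun n n x := sfun_eq_add n x ▸ le_add_of_nonneg_right (sfun_nonneg _ _)
    _ ≤ sfun n j x := sfun_antitone x hj

theorem sfun_zero_of_mem_sph (hx : x ∈ sph n) : sfun n 0 x = 1 := by
  simpa [sfun] using hx.out

/-- The coefficient `c_i(x) = x_i / √(s_i(x) s_{i+1}(x))`, with a `0`-based index: the rate at which
`e_{i+1}` scales the coordinates of index `> i`. -/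
def frameCoeff (n i : ℕ) (x : EuclideanSpace ℝ (Fin (n + 1))) : ℝ :=
  coordfun n x i / √(sfun n i x * sfun n (i + 1) x)

theorem sqrt_div_mul_div (j : ℕ) (x : EuclideanSpace ℝ (Fin (n + 1))) :
    √(sfun n (j + 1) x / sfun n j x) * (coordfun n x j / sfun n (j + 1) x) =
      frameCoeff n j x := by
  rw [frameCoeff, Real.sqrt_div (sfun_nonneg _ _), Real.sqrt_mul (sfun_nonneg _ _)]
  calc _ = coordfun n x j / √(sfun n j x) * (√(sfun n (j + 1) x) / sfun n (j + 1) x) := by ring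
    _ = _ := by rw [Real.sqrt_div_self', div_mul_div_comm, mul_one]

theorem sqrt_div_mul_coordfun (j : ℕ) (x : EuclideanSpace ℝ (Fin (n + 1))) :
    √(sfun n (j + 1) x / sfun n j x) * coordfun n x j = frameCoeff n j x * sfun n (j + 1) x := by
  rw [← sqrt_div_mul_div]
  rcases eq_or_ne (sfun n (j + 1) x) 0 with h | h
  · simp [h]
  · field_simp

theorem sq_frameCoeff {i : ℕ} (h : 0 < sfun n (i + 1) x) :
    frameCoeff n i x ^ 2 = (sfun n (i + 1) x)⁻¹ - (sfun n i x)⁻¹ := by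
  have h' : 0 < sfun n i x := h.trans_le (sfun_antitone x i.le_succ)
  rw [frameCoeff, div_pow, Real.sq_sqrt (mul_pos h' h).le]
  field_simp
  linarith [sfun_eq_add i x]

theorem efun_succ (j : ℕ) (x : EuclideanSpace ℝ (Fin (n + 1))) :
    efun n (j + 1) x = frameCoeff n j x • tailProj (n + 1) (j + 1) x -
      √(sfun n (j + 1) x / sfun n j x) • eps (n + 1) (j + 1) := by
  ext r
  simp only [efun, eps, tailProj_apply, add_tsub_cancel_right, ← sqrt_div_mul_div, PiLp.sub_apply,
    PiLp.smul_apply, smul_eq_mul, add_left_inj]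
  ring

theorem tailProj_efun_of_le {m j : ℕ} (h : m ≤ j) (x : EuclideanSpace ℝ (Fin (n + 1))) :
    tailProj (n + 1) m (efun n (j + 1) x) = efun n (j + 1) x := by
  rw [efun_succ, map_sub, map_smul, map_smul, tailProj_tailProj, tailProj_eps_of_le h,
    max_eq_right (by omega)]

theorem tailProj_efun_of_lt {m j : ℕ} (h : j < m) (x : EuclideanSpace ℝ (Fin (n + 1))) :
    tailProj (n + 1) m (efun n (j + 1) x) = frameCoeff n j x • tailProj (n + 1) m x := by
  rw [efun_succ, map_sub, map_smul, map_smul, tailProj_tailProj, tailProj_eps_of_lt h,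
    max_eq_left h, smul_zero, sub_zero]

theorem coordfun_efun_of_lt {i j : ℕ} (h : i < j) (x : EuclideanSpace ℝ (Fin (n + 1))) :
    coordfun n (efun n (j + 1) x) i = 0 := by
  simp only [coordfun, efun]
  grind

theorem coordfun_efun_self {j : ℕ} (hj : j ≤ n) (x : EuclideanSpace ℝ (Fin (n + 1))) :
    coordfun n (efun n (j + 1) x) j = -√(sfun n (j + 1) x / sfun n j x) := by
  simp [coordfun, efun, Nat.lt_succ_of_le hj]

theorem coordfun_efun_of_gt {i j : ℕ} (h : j < i) (x : EuclideanSpace ℝ (Fin (n + 1))) :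
    coordfun n (efun n (j + 1) x) i = frameCoeff n j x * coordfun n x i := by
  by_cases hi : i < n + 1
  · have hcoord := congrArg (· ⟨i, hi⟩) (tailProj_efun_of_lt h x)
    simpa [coordfun, hi, tailProj_apply] using hcoord
  · simp [coordfun, hi]

theorem differentiable_coordfun (i : ℕ) :
    Differentiable ℝ fun x : EuclideanSpace ℝ (Fin (n + 1)) => coordfun n x i := by
  unfold coordfun
  split_ifs <;> fun_prop

theorem fderiv_coordfun (i : ℕ) (x v : EuclideanSpace ℝ (Fin (n + 1))) :
    fderiv ℝ (fun y => coordfun n y i) x v = coordfun n v i := by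
  unfold coordfun
  split_ifs with h
  · exact congrArg (· v) (EuclideanSpace.proj (𝕜 := ℝ) (⟨i, h⟩ : Fin (n + 1))).fderiv
  · simp

theorem hasFDerivAt_sfun (m : ℕ) (x : EuclideanSpace ℝ (Fin (n + 1))) :
    HasFDerivAt (sfun n m)
      (2 • (innerSL ℝ (tailProj (n + 1) m x)).comp (tailProj (n + 1) m)) x := by
  rw [funext (sfun_eq_norm_sq m)]
  exact (tailProj (n + 1) m).hasFDerivAt.norm_sq

theorem differentiable_sfun (m : ℕ) : Differentiable ℝ (sfun n m) :=
  fun x => (hasFDerivAt_sfun m x).differentiableAt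

theorem fderiv_sfun_efun_of_lt {m j : ℕ} (h : j < m) (x : EuclideanSpace ℝ (Fin (n + 1))) :
    fderiv ℝ (sfun n m) x (efun n (j + 1) x) = 2 * frameCoeff n j x * sfun n m x := by
  simp [(hasFDerivAt_sfun m x).fderiv, tailProj_efun_of_lt h, sfun_eq_norm_sq, mul_assoc]

theorem fderiv_sfun_efun_of_le {m j : ℕ} (hj : j ≤ n) (h : m ≤ j)
    (x : EuclideanSpace ℝ (Fin (n + 1))) :
    fderiv ℝ (sfun n m) x (efun n (j + 1) x) = 0 := by
  have step (i : ℕ) : fderiv ℝ (sfun n i) x (efun n (j + 1) x) =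
      2 * coordfun n x i * coordfun n (efun n (j + 1) x) i +
        fderiv ℝ (sfun n (i + 1)) x (efun n (j + 1) x) := by
    rw [funext (sfun_eq_add i), fderiv_fun_add ((differentiable_coordfun i x).fun_pow 2)
      (differentiable_sfun _ x), fderiv_fun_pow 2 (differentiable_coordfun i x)]
    simp [fderiv_coordfun]
  induction h using Nat.decreasingInduction with
  | self =>
    rw [step, coordfun_efun_self hj, fderiv_sfun_efun_of_lt j.lt_succ_self]
    linear_combination -2 * sqrt_div_mul_coordfun j x
  | of_succ i hi ih => rw [step, ih, coordfun_efun_of_lt hi, mul_zero, add_zero]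

theorem differentiableAt_frameCoeff {i : ℕ} (h : 0 < sfun n (i + 1) x) :
    DifferentiableAt ℝ (frameCoeff n i) x := by
  have h' : 0 < sfun n i x := h.trans_le (sfun_antitone x i.le_succ)
  have hroot : DifferentiableAt ℝ (fun y => √(sfun n i y * sfun n (i + 1) y)) x :=
    ((differentiable_sfun i x).fun_mul (differentiable_sfun _ x)).sqrt (mul_pos h' h).ne'
  exact (differentiable_coordfun i x).mul (hroot.inv (Real.sqrt_pos.2 (mul_pos h' h)).ne')

theorem fderiv_frameCoeff {i : ℕ} (h : 0 < sfun n (i + 1) x) {v : EuclideanSpace ℝ (Fin (n + 1))}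
    {a b : ℝ} (ha : fderiv ℝ (sfun n i) x v = 2 * a * sfun n i x)
    (hb : fderiv ℝ (sfun n (i + 1)) x v = 2 * b * sfun n (i + 1) x) :
    fderiv ℝ (frameCoeff n i) x v =
      coordfun n v i / √(sfun n i x * sfun n (i + 1) x) - (a + b) * frameCoeff n i x := by
  have hq : 0 < sfun n i x * sfun n (i + 1) x :=
    mul_pos (h.trans_le (sfun_antitone x i.le_succ)) h
  have hpos := Real.sqrt_pos.2 hq
  have hdq : DifferentiableAt ℝ (fun y => sfun n i y * sfun n (i + 1) y) x :=
    (differentiable_sfun i x).fun_mul (differentiable_sfun _ x)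
  have hroot : fderiv ℝ (fun y => √(sfun n i y * sfun n (i + 1) y)) x v =
      (a + b) * √(sfun n i x * sfun n (i + 1) x) := by
    rw [fderiv_sqrt hdq hq.ne', fderiv_fun_mul (differentiable_sfun i x) (differentiable_sfun _ x)]
    simp only [FunLike.coe_smul, Pi.smul_apply, add_apply, smul_eq_mul, ha, hb]
    field_simp
    rw [Real.sq_sqrt hq.le]
    ring
  unfold frameCoeff
  rw [fderiv_div_apply (differentiable_coordfun i x) (hdq.sqrt hq.ne') hpos.ne', hroot,
    fderiv_coordfun]
  field_simp

theorem fderiv_frameCoeff_efun_of_lt {i j : ℕ} (h : i < j) (hj : j ≤ n)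
    (hx : 0 < sfun n (i + 1) x) : fderiv ℝ (frameCoeff n i) x (efun n (j + 1) x) = 0 := by
  rw [fderiv_frameCoeff hx (a := 0) (b := 0) (by simp [fderiv_sfun_efun_of_le hj h.le])
    (by simp [fderiv_sfun_efun_of_le hj (Nat.succ_le_of_lt h)]), coordfun_efun_of_lt h]
  simp

theorem fderiv_frameCoeff_efun_self {j : ℕ} (hx : 0 < sfun n (j + 1) x) :
    fderiv ℝ (frameCoeff n j) x (efun n (j + 1) x) = -(sfun n j x)⁻¹ - frameCoeff n j x ^ 2 := by
  have hj : j ≤ n := j.le_succ.trans (le_of_sfun_pos hx)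
  have hx' : 0 < sfun n j x := hx.trans_le (sfun_antitone x j.le_succ)
  have hroot : √(sfun n (j + 1) x / sfun n j x) / √(sfun n j x * sfun n (j + 1) x) =
      (sfun n j x)⁻¹ := by
    rw [← Real.sqrt_div' _ (by positivity), ← Real.sqrt_sq (inv_pos.2 hx').le]
    congr 1
    field_simp
  rw [fderiv_frameCoeff hx (a := 0) (by simp [fderiv_sfun_efun_of_le hj le_rfl])
    (fderiv_sfun_efun_of_lt j.lt_succ_self x), coordfun_efun_self hj, neg_div, hroot]
  ring

theorem fderiv_frameCoeff_efun_of_gt {i j : ℕ} (h : j < i) (hx : 0 < sfun n (i + 1) x) :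
    fderiv ℝ (frameCoeff n i) x (efun n (j + 1) x) = -(frameCoeff n j x * frameCoeff n i x) := by
  rw [fderiv_frameCoeff hx (fderiv_sfun_efun_of_lt h x)
    (fderiv_sfun_efun_of_lt (Nat.lt_succ_of_lt h) x),
    coordfun_efun_of_gt h, mul_div_assoc, ← frameCoeff]
  ring

theorem differentiableAt_sqrt_sfun_div {j : ℕ} (h : 0 < sfun n (j + 1) x) :
    DifferentiableAt ℝ (fun y => √(sfun n (j + 1) y / sfun n j y)) x := by
  have h' : 0 < sfun n j x := h.trans_le (sfun_antitone x j.le_succ)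
  exact ((differentiable_sfun _ x).mul ((differentiable_sfun j x).inv h'.ne')).sqrt
    (div_pos h h').ne'

theorem fderiv_sqrt_sfun_div {j : ℕ} (h : 0 < sfun n (j + 1) x)
    {v : EuclideanSpace ℝ (Fin (n + 1))} {a : ℝ}
    (ha : fderiv ℝ (sfun n j) x v = 2 * a * sfun n j x)
    (hb : fderiv ℝ (sfun n (j + 1)) x v = 2 * a * sfun n (j + 1) x) :
    fderiv ℝ (fun y => √(sfun n (j + 1) y / sfun n j y)) x v = 0 := by
  have h' : 0 < sfun n j x := h.trans_le (sfun_antitone x j.le_succ)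
  have hdq : DifferentiableAt ℝ (fun y => sfun n (j + 1) y / sfun n j y) x :=
    (differentiable_sfun _ x).mul ((differentiable_sfun j x).inv h'.ne')
  rw [fderiv_sqrt hdq (div_pos h h').ne', FunLike.coe_smul, Pi.smul_apply,
    fderiv_div_apply (differentiable_sfun _ x) (differentiable_sfun j x) h'.ne', ha, hb]
  ring

theorem hasFDerivAt_efun {j : ℕ} (h : 0 < sfun n (j + 1) x) :
    HasFDerivAt (efun n (j + 1))
      (frameCoeff n j x • tailProj (n + 1) (j + 1) +
          (fderiv ℝ (frameCoeff n j) x).smulRight (tailProj (n + 1) (j + 1) x) -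
        (fderiv ℝ (fun y => √(sfun n (j + 1) y / sfun n j y)) x).smulRight
          (eps (n + 1) (j + 1))) x := by
  rw [funext (efun_succ j)]
  exact ((differentiableAt_frameCoeff h).hasFDerivAt.fun_smul
    (tailProj (n + 1) (j + 1)).hasFDerivAt).fun_sub
      ((differentiableAt_sqrt_sfun_div h).hasFDerivAt.smul_const _)

theorem fderiv_efun_efun_of_lt {l k : ℕ} (hlk : l < k) (hk : k ≤ n) (hx : 0 < sfun n (l + 1) x) :
    fderiv ℝ (efun n (l + 1)) x (efun n (k + 1) x) = frameCoeff n l x • efun n (k + 1) x := by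
  have hroot := fderiv_sqrt_sfun_div hx (v := efun n (k + 1) x) (a := 0)
    (by simp [fderiv_sfun_efun_of_le hk hlk.le])
    (by simp [fderiv_sfun_efun_of_le hk (Nat.succ_le_of_lt hlk)])
  simp [(hasFDerivAt_efun hx).fderiv, tailProj_efun_of_le (Nat.succ_le_of_lt hlk),
    fderiv_frameCoeff_efun_of_lt hlk hk hx, hroot]

theorem fderiv_efun_efun_of_gt {l k : ℕ} (hlk : l < k) (hx : 0 < sfun n (k + 1) x) :
    fderiv ℝ (efun n (k + 1)) x (efun n (l + 1) x) = 0 := by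
  have hroot := fderiv_sqrt_sfun_div hx (fderiv_sfun_efun_of_lt hlk x)
    (fderiv_sfun_efun_of_lt (Nat.lt_succ_of_lt hlk) x)
  simp [(hasFDerivAt_efun hx).fderiv, tailProj_efun_of_lt (Nat.lt_succ_of_lt hlk),
    fderiv_frameCoeff_efun_of_gt hlk hx, hroot, smul_smul, mul_comm]

theorem lieBracket_efun {l k : ℕ} (hlk : l < k) (hx : 0 < sfun n (k + 1) x) :
    VectorField.lieBracket ℝ (efun n (k + 1)) (efun n (l + 1)) x =
      frameCoeff n l x • efun n (k + 1) x := by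
  rw [VectorField.lieBracket, fderiv_efun_efun_of_gt hlk hx, sub_zero,
    fderiv_efun_efun_of_lt hlk (k.le_succ.trans (le_of_sfun_pos hx))
      (hx.trans_le (sfun_antitone x (Nat.succ_le_succ hlk.le)))]

end Frame

section Rolling

variable {n : ℕ} {x : EuclideanSpace ℝ (Fin (n + 1))}

/-- The vector `w_k(x) = c_0(x) ε_1 + ⋯ + c_{k-1}(x) ε_k` of `ℝ^n`. -/
def rollVec (n k : ℕ) (x : EuclideanSpace ℝ (Fin (n + 1))) : Fin n → ℝ :=
  fun i => if (i : ℕ) < k then frameCoeff n i x else 0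

/-- The skew-symmetric matrix `ε_{k+1} ∧ w_k(x)`, the infinitesimal rotation of the rolling
motion along `X_{k+1}`. -/
def rollForm (n k : ℕ) (x : EuclideanSpace ℝ (Fin (n + 1))) : Matrix (Fin n) (Fin n) ℝ :=
  wedge (eps n (k + 1)).ofLp (rollVec n k x)

theorem eps_eq_single {k : ℕ} (hk : k < n) : (eps n (k + 1)).ofLp = Pi.single ⟨k, hk⟩ 1 := by
  ext i
  simp [eps, Pi.single_apply, Fin.ext_iff]

theorem Emat_sub_Emat (l k : ℕ) :
    Emat n l k - Emat n k l = wedge (eps n l).ofLp (eps n k).ofLp := by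
  ext i j
  simp only [Emat, eps, wedge_apply, Matrix.sub_apply, Matrix.of_apply, Matrix.vecMulVec_apply,
    ite_zero_mul_ite_zero, mul_one]

theorem rollVec_eq_sum (k : ℕ) (x : EuclideanSpace ℝ (Fin (n + 1))) :
    rollVec n k x = ∑ i ∈ Finset.range k, frameCoeff n i x • (eps n (i + 1)).ofLp := by
  ext r
  simp [rollVec, eps, Finset.sum_apply]

theorem Xfield_succ (k : ℕ) :
    Xfield n (k + 1) =
      invariantField (efun n (k + 1)) (eps n (k + 1)).ofLp (rollForm n k) := by
  ext1 p
  have hterm (i : ℕ) : (coordfun n p.1 i / √(sfun n i p.1 * sfun n (i + 1) p.1)) •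
      (p.2.2 * (Emat n (i + 1) (k + 1) - Emat n (k + 1) (i + 1))) =
        -(p.2.2 * frameCoeff n i p.1 • wedge (eps n (k + 1)).ofLp (eps n (i + 1)).ofLp) := by
    rw [← frameCoeff, Emat_sub_Emat, wedge_swap, mul_neg, smul_neg, Matrix.mul_smul]
  have hshift := Finset.sum_Ico_add' (fun i => (coordfun n p.1 (i - 1) /
    √(sfun n (i - 1) p.1 * sfun n i p.1)) • (p.2.2 * (Emat n i (k + 1) - Emat n (k + 1) i))) 0 k 1
  refine Prod.ext rfl (Prod.ext rfl ((congrArg (- ·) hshift.symm).trans ?_))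
  simp only [add_tsub_cancel_right, hterm, invariantField, rollForm, rollVec_eq_sum, map_sum,
    map_smul, Finset.mul_sum, Finset.sum_neg_distrib, neg_neg, Finset.range_eq_Ico]

theorem Yfield_eq (l k : ℕ) (p : Conf n) :
    Yfield n l k p = (0, 0, p.2.2 * wedge (eps n l).ofLp (eps n k).ofLp) := by
  rw [Yfield, Emat_sub_Emat]

theorem eps_dotProduct_eps {l k : ℕ} (h : l ≠ k) :
    (eps n (l + 1)).ofLp ⬝ᵥ (eps n (k + 1)).ofLp = 0 :=
  Finset.sum_eq_zero fun i _ => by simp only [eps]; grind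

theorem rollVec_dotProduct_eps {l : ℕ} (hl : l < n) (k : ℕ) (x : EuclideanSpace ℝ (Fin (n + 1))) :
    rollVec n k x ⬝ᵥ (eps n (l + 1)).ofLp = if l < k then frameCoeff n l x else 0 := by
  rw [eps_eq_single hl, dotProduct_single_one, rollVec]

theorem rollVec_dotProduct_rollVec {l k : ℕ} (hlk : l ≤ k) (hx : 0 < sfun n l x) :
    rollVec n k x ⬝ᵥ rollVec n l x = (sfun n l x)⁻¹ - (sfun n 0 x)⁻¹ := by
  have hterm (i : ℕ) (hi : i < l) : rollVec n k x ⬝ᵥ frameCoeff n i x • (eps n (i + 1)).ofLp =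
      (sfun n (i + 1) x)⁻¹ - (sfun n i x)⁻¹ := by
    rw [dotProduct_smul, rollVec_dotProduct_eps (hi.trans_le (le_of_sfun_pos hx)),
      if_pos (hi.trans_le hlk), smul_eq_mul, ← sq,
      sq_frameCoeff (hx.trans_le (sfun_antitone x hi))]
  rw [rollVec_eq_sum l, dotProduct_sum,
    Finset.sum_congr rfl fun i hi => hterm i (Finset.mem_range.1 hi),
    Finset.sum_range_sub fun i => (sfun n i x)⁻¹]

theorem differentiableAt_rollVec {k : ℕ} (hx : 0 < sfun n k x) :
    DifferentiableAt ℝ (rollVec n k) x := by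
  refine differentiableAt_pi.2 fun i => ?_
  by_cases hi : (i : ℕ) < k
  · simpa only [rollVec, if_pos hi] using
      differentiableAt_frameCoeff (hx.trans_le (sfun_antitone x hi))
  · simp [rollVec, hi]

theorem fderiv_rollVec_apply {k : ℕ} (hx : 0 < sfun n k x) (v : EuclideanSpace ℝ (Fin (n + 1)))
    (i : Fin n) :
    fderiv ℝ (rollVec n k) x v i = if (i : ℕ) < k then fderiv ℝ (frameCoeff n i) x v else 0 := by
  have hcoord := congrArg (· v) (fderiv_apply (differentiableAt_rollVec hx) i)
  refine hcoord.symm.trans ?_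
  unfold rollVec
  split_ifs with hi
  · rfl
  · simp

theorem fderiv_rollVec_efun_of_le {l k : ℕ} (hlk : l ≤ k) (hk : k ≤ n) (hx : 0 < sfun n l x) :
    fderiv ℝ (rollVec n l) x (efun n (k + 1) x) = 0 := by
  ext i
  rw [fderiv_rollVec_apply hx, Pi.zero_apply, ite_eq_right_iff]
  exact fun hi => fderiv_frameCoeff_efun_of_lt (hi.trans_le hlk) hk
    (hx.trans_le (sfun_antitone x hi))

theorem fderiv_rollVec_efun_of_gt {l k : ℕ} (hlk : l < k) (hx : 0 < sfun n k x) :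
    fderiv ℝ (rollVec n k) x (efun n (l + 1) x) =
      -(sfun n l x)⁻¹ • (eps n (l + 1)).ofLp -
        frameCoeff n l x • (rollVec n k x - rollVec n l x) := by
  ext i
  have hxi (hi : (i : ℕ) < k) : 0 < sfun n (i + 1) x := hx.trans_le (sfun_antitone x hi)
  simp only [fderiv_rollVec_apply hx, rollVec, eps, Pi.sub_apply, Pi.smul_apply, smul_eq_mul,
    add_left_inj]
  rcases lt_trichotomy (i : ℕ) l with hil | hil | hil
  · simp [hil, hil.ne, hil.trans hlk,
      fderiv_frameCoeff_efun_of_lt hil (hlk.le.trans (le_of_sfun_pos hx)) (hxi (hil.trans hlk))]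
  · subst hil
    simp [hlk, fderiv_frameCoeff_efun_self (hxi hlk), sq]
  · simp only [hil.ne', hil.not_gt, if_false]
    split_ifs with hik
    · simp [fderiv_frameCoeff_efun_of_gt hil (hxi hik)]
    · simp

theorem differentiableAt_rollForm {k : ℕ} (hx : 0 < sfun n k x) :
    DifferentiableAt ℝ (rollForm n k) x :=
  (wedge (eps n (k + 1)).ofLp).toContinuousLinearMap.differentiableAt.comp x
    (differentiableAt_rollVec hx)

theorem fderiv_rollForm {k : ℕ} (hx : 0 < sfun n k x) (v : EuclideanSpace ℝ (Fin (n + 1))) :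
    fderiv ℝ (rollForm n k) x v =
      wedge (eps n (k + 1)).ofLp (fderiv ℝ (rollVec n k) x v) :=
  congrArg (· v) ((wedge (eps n (k + 1)).ofLp).toContinuousLinearMap.hasFDerivAt.comp x
    (differentiableAt_rollVec hx).hasFDerivAt).fderiv

theorem rollForm_mulVec_eps_of_lt {l k : ℕ} (hlk : l < k) (hl : l < n)
    (x : EuclideanSpace ℝ (Fin (n + 1))) :
    rollForm n k x *ᵥ (eps n (l + 1)).ofLp = frameCoeff n l x • (eps n (k + 1)).ofLp := by
  rw [rollForm, wedge_mulVec, rollVec_dotProduct_eps hl, if_pos hlk, eps_dotProduct_eps hlk.ne',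
    zero_smul, sub_zero]

theorem rollForm_mulVec_eps_of_gt {l k : ℕ} (hlk : l < k) (hk : k < n)
    (x : EuclideanSpace ℝ (Fin (n + 1))) :
    rollForm n l x *ᵥ (eps n (k + 1)).ofLp = 0 := by
  rw [rollForm, wedge_mulVec, rollVec_dotProduct_eps hk, if_neg hlk.not_gt,
    eps_dotProduct_eps hlk.ne, zero_smul, zero_smul, sub_zero]

theorem rollForm_mulVec_rollVec {l k : ℕ} (hlk : l ≤ k) (hk : k < n) (hx : 0 < sfun n l x) :
    rollForm n k x *ᵥ rollVec n l x =
      ((sfun n l x)⁻¹ - (sfun n 0 x)⁻¹) • (eps n (k + 1)).ofLp := by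
  rw [rollForm, wedge_mulVec, rollVec_dotProduct_rollVec hlk hx, dotProduct_comm,
    rollVec_dotProduct_eps hk, if_neg hlk.not_gt, zero_smul, sub_zero]

theorem lie_rollForm_rollForm {l k : ℕ} (hlk : l < k) (hk : k < n) (hx : 0 < sfun n l x) :
    ⁅rollForm n k x, rollForm n l x⁆ =
      frameCoeff n l x • wedge (eps n (k + 1)).ofLp (rollVec n l x) +
        ((sfun n l x)⁻¹ - (sfun n 0 x)⁻¹) •
          wedge (eps n (l + 1)).ofLp (eps n (k + 1)).ofLp := by
  rw [rollForm.eq_def n l, lie_wedge (S := rollForm n k x) (transpose_wedge _ _),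
    rollForm_mulVec_eps_of_lt hlk (hlk.trans hk), rollForm_mulVec_rollVec hlk.le hk hx, map_smul,
    map_smul, LinearMap.smul_apply]

theorem rollForm_structure_equation {l k : ℕ} (hlk : l < k) (hk : k < n) (hx : 0 < sfun n k x) :
    ⁅rollForm n k x, rollForm n l x⁆ + fderiv ℝ (rollForm n l) x (efun n (k + 1) x) -
        fderiv ℝ (rollForm n k) x (efun n (l + 1) x) =
      frameCoeff n l x • rollForm n k x -
        (sfun n 0 x)⁻¹ • wedge (eps n (l + 1)).ofLp (eps n (k + 1)).ofLp := by
  have hxl : 0 < sfun n l x := hx.trans_le (sfun_antitone x hlk.le)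
  rw [lie_rollForm_rollForm hlk hk hxl, fderiv_rollForm hxl, fderiv_rollForm hx,
    fderiv_rollVec_efun_of_le hlk.le hk.le hxl, fderiv_rollVec_efun_of_gt hlk hx, rollForm,
    map_zero, map_sub, map_smul, map_smul, map_sub, wedge_swap (eps n (l + 1)).ofLp]
  module

end Rolling

theorem statement8_general {n l k : ℕ} (hl : 1 ≤ l) (hlk : l < k) {p : Conf n}
    (hp : 0 < sfun n k p.1) :
    VectorField.lieBracket ℝ (Xfield n k) (Xfield n l) p =
      (coordfun n p.1 (l - 1) / √(sfun n (l - 1) p.1 * sfun n l p.1)) • Xfield n k p -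
        (sfun n 0 p.1)⁻¹ • Yfield n l k p := by
  obtain ⟨l, rfl⟩ := Nat.exists_eq_add_of_le' hl
  obtain ⟨k, rfl⟩ := Nat.exists_eq_add_of_le' (hl.trans hlk.le)
  replace hlk : l < k := Nat.lt_of_succ_lt_succ hlk
  have hk : k < n := le_of_sfun_pos hp
  have hpl : 0 < sfun n (l + 1) p.1 := hp.trans_le (sfun_antitone _ (Nat.succ_le_succ hlk.le))
  have hpk : 0 < sfun n k p.1 := hp.trans_le (sfun_antitone _ k.le_succ)
  have hpl' : 0 < sfun n l p.1 := hpl.trans_le (sfun_antitone _ l.le_succ)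
  rw [Xfield_succ, Xfield_succ, lieBracket_invariantField _ _ (hasFDerivAt_efun hp).differentiableAt
    (hasFDerivAt_efun hpl).differentiableAt (differentiableAt_rollForm hpk)
    (differentiableAt_rollForm hpl'), lieBracket_efun hlk hp,
    rollForm_structure_equation hlk hk hpk,
    rollForm_mulVec_eps_of_lt hlk (hlk.trans hk), rollForm_mulVec_eps_of_gt hlk hk, Yfield_eq]
  change _ = frameCoeff n l p.1 • _ - _
  refine Prod.ext ?_ (Prod.ext ?_ ?_)
  · simp [invariantField]
  · simp [invariantField, Matrix.mulVec_smul]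
  · simp [invariantField, mul_sub]

/-- For `1 ≤ l < k ≤ n` and every `p = (x, x̂, A) ∈ Ω` with `x ∈ S^n`,
`[X_k, X_l](p) = (x_{l−1} / √(s_{l−1}(x) s_l(x))) · X_k(p) − (0, 0, A(E_{lk} − E_{kl}))`. -/
theorem statement8 (n l k : ℕ) (hl : 1 ≤ l) (hlk : l < k) (hk : k ≤ n)
    (p : Conf n) (hU : p.1 ∈ Usph n) (hS : p.1 ∈ sph n) :
    fderiv ℝ (Xfield n l) p (Xfield n k p) - fderiv ℝ (Xfield n k) p (Xfield n l p)
      = (coordfun n p.1 (l - 1) / Real.sqrt (sfun n (l - 1) p.1 * sfun n l p.1)) • Xfield n k p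
        - Yfield n l k p := by
  have h := statement8_general hl hlk (sfun_pos_of_mem_Usph hk hU)
  rwa [sfun_zero_of_mem_sph hS, inv_one, one_smul] at h
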